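/- Let R be a Prüfer v-multiplication domain (PVMD) of finite Krull dimension. Then dim(Int(R)) = dim(R[X]). -/

import Mathlib

/- Preamble: integer-valued polynomials and essential domains. -/

noncomputable section

open Polynomial

/-- The image in the quotient field `FractionRing R` of the localization `R_p` of `R`
at (the complement of) an ideal `p`, as a subset of `FractionRing R`. -/
def locSet (R : Type*) [CommRing R] [IsDomain R] (p : Ideal R) : Set (FractionRing R) :=
  {x | ∃ a s : R, s ∉ p ∧ x = algebraMap R (FractionRing R) a / algebraMap R (FractionRing R) s}

/-- An integral domain `R` is *essential* if there is a set `Δ` of prime ideals of `R`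
such that `R = ⋂_{p ∈ Δ} R_p` (inside the quotient field) and each `R_p` is a valuation
domain (equivalently, for every `x` in the quotient field, `x ∈ R_p` or `x⁻¹ ∈ R_p`). -/
def IsEssential (R : Type*) [CommRing R] [IsDomain R] : Prop :=
  ∃ Δ : Set (Ideal R),
    (∀ p ∈ Δ, p.IsPrime) ∧
    (∀ p ∈ Δ, ∀ x : FractionRing R, x ∈ locSet R p ∨ x⁻¹ ∈ locSet R p) ∧
    Set.range (algebraMap R (FractionRing R)) = ⋂ p ∈ Δ, locSet R p

/-- An integral domain `R` is *locally essential* if `R_q` is an essential domain for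
every prime ideal `q` of `R`. -/
def IsLocallyEssential (R : Type*) [CommRing R] [IsDomain R] : Prop :=
  ∀ (q : Ideal R) (hq : q.IsPrime), IsEssential (Localization (@Ideal.primeCompl R _ q hq))

/-- The ring `Int(R) = {f ∈ K[X] : f(R) ⊆ R}` of integer-valued polynomials over `R`,
as a subring of `K[X]` where `K` is the quotient field of `R`. -/
def IntPoly (R : Type*) [CommRing R] [IsDomain R] : Subring (Polynomial (FractionRing R)) :=
  ⨅ a : R, Subring.comap (Polynomial.evalRingHom (algebraMap R (FractionRing R) a))
    (algebraMap R (FractionRing R)).range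

end

noncomputable section

/-- The `t`-closure of an integral ideal `I` of `R`: the set of elements of `R` lying
in some `J_v = (J⁻¹)⁻¹` where `J` ranges over the nonzero finitely generated fractional
ideals contained in `I`. -/
def tClosure (R : Type*) [CommRing R] [IsDomain R] (I : Ideal R) : Set R :=
  {x | ∃ J : FractionalIdeal (nonZeroDivisors R) (FractionRing R),
      J ≠ 0 ∧ (J : Submodule R (FractionRing R)).FG ∧ J ≤ (I : FractionalIdeal (nonZeroDivisors R) (FractionRing R)) ∧
      algebraMap R (FractionRing R) x ∈ (J⁻¹)⁻¹}

/-- An integral ideal `I` is a `t`-ideal if `I_t = I`. -/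
def IsTIdeal (R : Type*) [CommRing R] [IsDomain R] (I : Ideal R) : Prop :=
  tClosure R I = (I : Set R)

/-- `R` is a Prüfer `v`-multiplication domain (PVMD) if `R_p` is a valuation domain for
every prime ideal `p` that is maximal among proper integral `t`-ideals of `R`. -/
def IsPVMD (R : Type*) [CommRing R] [IsDomain R] : Prop :=
  ∀ (p : Ideal R) (hp : p.IsPrime),
    (IsTIdeal R p ∧ p ≠ ⊤ ∧
      ∀ J : Ideal R, IsTIdeal R J → J ≠ ⊤ → p ≤ J → p = J) →
    haveI := hp
    ValuationRing (Localization.AtPrime p)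

end

/-!
Call a prime `p` of `R` valued if `R_p` is a valuation ring. If `R` is locally essential and
`x = a / b` does not lie in `R_q`, then the ideal of denominators of `x` is contained in a valued
prime `p ≤ q`. In a PVMD, any minimal prime of that ideal serves: it is again a `t`-ideal, hence
contained in a maximal `t`-ideal, which is valued.

Let `P` be a prime of `Int(R)` or of `R[X]`, lying over `q`.

* If `q` is valued, then `ht P ≤ ht q + 1 ≤ dim R + 1`, because primes over a valued prime obey the
  dimension inequality: descending along a chain below `P`, every step either strictly shrinks the
  contraction to `R` or enlarges a family of elements algebraically independent modulo the current
  prime. Valuedness lets such a family be lifted from `P` to a smaller prime, by dividing a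
  polynomial relation by its coefficient of least valuation.
* If `q` is not valued, then any coefficient of some `f ∈ Int(R)` outside `R_q` would be
  outside `R_p` for a valued prime `p < q`. But `R / p` is a domain which is not a field, so it is
  infinite, and interpolating `f` at elements distinct modulo `p` puts its coefficients in `R_p`.
  So `Int(R)` and `R[X]` have the same localization at `R \ q`, and `ht P` is bounded by the
  dimension of either ring.

The theorem follows since both dimensions are at least `dim R + 1`.
-/

section DenominatorIdeals

/-- The ideal `{r | r * (a / b) ∈ R}` of denominators of the fraction `a / b`, written without
leaving `R`. For `b = 0` it is the annihilator of `a`. -/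
def denIdeal {R : Type*} [CommRing R] (a b : R) : Ideal R :=
  (Ideal.span {b}).colon {a}

variable {R : Type*} [CommRing R]

lemma mem_denIdeal {a b r : R} : r ∈ denIdeal a b ↔ b ∣ r * a := by
  rw [denIdeal, Submodule.mem_colon_singleton, smul_eq_mul, Ideal.mem_span_singleton]

lemma denIdeal_zero_left (b : R) : denIdeal 0 b = ⊤ :=
  (Ideal.eq_top_iff_one _).2 (mem_denIdeal.2 (by simp))

lemma self_mem_denIdeal (a b : R) : b ∈ denIdeal a b := mem_denIdeal.2 (dvd_mul_right b a)

lemma denIdeal_eq_top_iff {a b : R} : denIdeal a b = ⊤ ↔ b ∣ a := by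
  rw [Ideal.eq_top_iff_one, mem_denIdeal, one_mul]

lemma mul_mem_denIdeal {a b r s : R} : r * s ∈ denIdeal a b ↔ r ∈ denIdeal (s * a) b := by
  rw [mem_denIdeal, mem_denIdeal, mul_assoc]

lemma denIdeal_congr {a a' b b' : R} (ha : Associated a a') (hb : Associated b b') :
    denIdeal a b = denIdeal a' b' := by
  ext r
  rw [mem_denIdeal, mem_denIdeal, hb.dvd_iff_dvd_left, (ha.mul_left r).dvd_iff_dvd_right]

end DenominatorIdeals

section ValuedPrimes

/-- A *valued prime* of `R`: a prime ideal `p` whose localization `R_p` is a valuation ring.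
The condition on `R_p` is stated for elements of `R`, with the denominators cleared. -/
structure IsValuedPrime {R : Type*} [CommRing R] (p : Ideal R) : Prop extends p.IsPrime where
  dvd_or_dvd : ∀ a b : R, ∃ s ∉ p, a ∣ s * b ∨ b ∣ s * a

variable {R : Type*} [CommRing R]

namespace IsValuedPrime

lemma of_le {p q : Ideal R} (hq : IsValuedPrime q) (hp : p.IsPrime) (hpq : p ≤ q) :
    IsValuedPrime p where
  toIsPrime := hp
  dvd_or_dvd a b :=
    let ⟨s, hs, h⟩ := hq.dvd_or_dvd a b
    ⟨s, fun hsp ↦ hs (hpq hsp), h⟩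

lemma exists_forall_dvd {ι : Type*} {q : Ideal R} (hq : IsValuedPrime q) (c : ι → R)
    {S : Finset ι} (hS : S.Nonempty) : ∃ i ∈ S, ∃ s ∉ q, ∀ j ∈ S, c i ∣ s * c j := by
  have mul_notMem {s t : R} (hs : s ∉ q) (ht : t ∉ q) : s * t ∉ q :=
    fun h ↦ (hq.mem_or_mem h).elim hs ht
  induction hS using Finset.Nonempty.cons_induction with
  | singleton a => exact ⟨a, by simp, 1, hq.one_notMem, by simp⟩
  | cons a T ha _ ih =>
    obtain ⟨i, hi, s, hs, hdvd⟩ := ih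
    obtain ⟨t, ht, hia | hai⟩ := hq.dvd_or_dvd (c i) (c a)
    · refine ⟨i, by simp [hi], s * t, mul_notMem hs ht, ?_⟩
      simp only [Finset.forall_mem_cons, mul_assoc s t]
      refine ⟨hia.mul_left s, fun j hj ↦ ?_⟩
      rw [mul_left_comm]
      exact (hdvd j hj).mul_left t
    · refine ⟨a, by simp, s * t, mul_notMem hs ht, ?_⟩
      simp only [Finset.forall_mem_cons, mul_comm s t, mul_assoc t s]
      refine ⟨(dvd_mul_left _ _).mul_left t, fun j hj ↦ ?_⟩
      exact hai.trans (mul_dvd_mul_left t (hdvd j hj))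

end IsValuedPrime

lemma isValuedPrime_iff_denIdeal {p : Ideal R} [hp : p.IsPrime] :
    IsValuedPrime p ↔ ∀ a b : R, ¬ denIdeal a b ≤ p ∨ ¬ denIdeal b a ≤ p := by
  simp only [SetLike.not_le_iff_exists, mem_denIdeal]
  refine ⟨fun h a b ↦ ?_, fun h ↦ ⟨hp, fun a b ↦ ?_⟩⟩
  · obtain ⟨s, hs, hab | hba⟩ := h.dvd_or_dvd a b
    · exact Or.inr ⟨s, hab, hs⟩
    · exact Or.inl ⟨s, hba, hs⟩
  · obtain ⟨s, hba, hs⟩ | ⟨s, hab, hs⟩ := h a b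
    · exact ⟨s, hs, Or.inr hba⟩
    · exact ⟨s, hs, Or.inl hab⟩

end ValuedPrimes

section Localization

variable {R S : Type*} [CommRing R] [CommRing S] [Algebra R S] (M : Submonoid R)
  [IsLocalization M S]

include M in
lemma exists_associated_algebraMap (x : S) : ∃ a : R, Associated x (algebraMap R S a) :=
  let ⟨⟨a, s⟩, h⟩ := IsLocalization.surj M x
  ⟨a, (IsLocalization.map_units S s).unit, h⟩

lemma algebraMap_dvd_algebraMap_iff {a b : R} :
    algebraMap R S a ∣ algebraMap R S b ↔ ∃ t ∈ M, a ∣ t * b := by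
  rw [← Ideal.mem_span_singleton, ← Set.image_singleton, ← Ideal.map_span,
    IsLocalization.algebraMap_mem_map_algebraMap_iff M]
  simp only [Ideal.mem_span_singleton]

include M in
lemma denIdeal_algebraMap (a b : R) :
    denIdeal (algebraMap R S a) (algebraMap R S b) = (denIdeal a b).map (algebraMap R S) := by
  ext x
  obtain ⟨r, hr⟩ := exists_associated_algebraMap M x
  rw [Ideal.mem_iff_of_associated hr, Ideal.mem_iff_of_associated hr, mem_denIdeal, ← map_mul,
    algebraMap_dvd_algebraMap_iff M, IsLocalization.algebraMap_mem_map_algebraMap_iff M]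
  simp only [mem_denIdeal, mul_assoc]

include M in
lemma isValuedPrime_under_iff {P : Ideal S} [P.IsPrime] :
    IsValuedPrime (P.under R) ↔ IsValuedPrime P := by
  simp only [isValuedPrime_iff_denIdeal, Ideal.under_def, ← Ideal.map_le_iff_le_comap,
    ← denIdeal_algebraMap M]
  refine ⟨fun h x y ↦ ?_, fun h a b ↦ h _ _⟩
  obtain ⟨a, ha⟩ := exists_associated_algebraMap M x
  obtain ⟨b, hb⟩ := exists_associated_algebraMap M y
  rw [denIdeal_congr ha hb, denIdeal_congr hb ha]
  exact h a b

end Localization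

lemma isValuedPrime_of_valuationRing {R : Type*} [CommRing R] [IsDomain R] (p : Ideal R)
    [p.IsPrime] [ValuationRing (Localization.AtPrime p)] : IsValuedPrime p := by
  rw [← Localization.AtPrime.under_maximalIdeal (I := p), isValuedPrime_under_iff p.primeCompl]
  refine ⟨inferInstance, fun a b ↦ ⟨1, Ideal.one_notMem _, ?_⟩⟩
  simpa only [one_mul] using ValuationRing.dvd_total a b

section Essential

variable {R : Type*} [CommRing R] [IsDomain R]

lemma div_mem_locSet_iff {p : Ideal R} {a b : R} (hb : b ≠ 0) :
    algebraMap R (FractionRing R) a / algebraMap R (FractionRing R) b ∈ locSet R p ↔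
      ¬ denIdeal a b ≤ p := by
  have inj := IsFractionRing.injective R (FractionRing R)
  have map_ne_zero {x : R} (hx : x ≠ 0) : algebraMap R (FractionRing R) x ≠ 0 :=
    (map_ne_zero_iff _ inj).2 hx
  rw [SetLike.not_le_iff_exists]
  refine ⟨fun ⟨c, s, hs, h⟩ ↦ ⟨s, mem_denIdeal.2 ⟨c, inj ?_⟩, hs⟩, fun ⟨s, hsI, hs⟩ ↦ ?_⟩
  · have hs0 : s ≠ 0 := fun h0 ↦ hs (h0 ▸ p.zero_mem)
    rw [div_eq_div_iff (map_ne_zero hb) (map_ne_zero hs0)] at h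
    rw [map_mul, map_mul]
    linear_combination h
  · obtain ⟨c, hc⟩ := mem_denIdeal.1 hsI
    have hs0 : s ≠ 0 := fun h0 ↦ hs (h0 ▸ p.zero_mem)
    refine ⟨c, s, hs, ?_⟩
    rw [div_eq_div_iff (map_ne_zero hb) (map_ne_zero hs0), ← map_mul, ← map_mul]
    congr 1
    linear_combination hc

lemma div_mem_range_iff {a b : R} (hb : b ≠ 0) :
    algebraMap R (FractionRing R) a / algebraMap R (FractionRing R) b ∈
      Set.range (algebraMap R (FractionRing R)) ↔ b ∣ a := by
  have inj := IsFractionRing.injective R (FractionRing R)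
  simp only [Set.mem_range, eq_div_iff ((map_ne_zero_iff _ inj).2 hb), ← map_mul, inj.eq_iff,
    dvd_def, mul_comm b, eq_comm]

lemma isValuedPrime_iff_locSet {p : Ideal R} [hp : p.IsPrime] :
    IsValuedPrime p ↔ ∀ x : FractionRing R, x ∈ locSet R p ∨ x⁻¹ ∈ locSet R p := by
  rw [isValuedPrime_iff_denIdeal]
  refine ⟨fun h x ↦ ?_, fun h a b ↦ ?_⟩
  · obtain ⟨a, b, hb, rfl⟩ := IsFractionRing.div_surjective (A := R) x
    have hb0 := nonZeroDivisors.ne_zero hb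
    rcases eq_or_ne a 0 with rfl | ha0
    · exact Or.inl ((div_mem_locSet_iff hb0).2 (by simp [denIdeal_zero_left, hp.ne_top]))
    · rw [inv_div, div_mem_locSet_iff hb0, div_mem_locSet_iff ha0]
      exact h a b
  · rcases eq_or_ne a 0 with rfl | ha0
    · exact Or.inl (by simp [denIdeal_zero_left, hp.ne_top])
    rcases eq_or_ne b 0 with rfl | hb0
    · exact Or.inr (by simp [denIdeal_zero_left, hp.ne_top])
    rw [← div_mem_locSet_iff hb0, ← div_mem_locSet_iff ha0, ← inv_div (algebraMap R _ a)]
    exact h _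

lemma isEssential_iff :
    IsEssential R ↔
      ∀ a b : R, b ≠ 0 → ¬ b ∣ a → ∃ p, IsValuedPrime p ∧ denIdeal a b ≤ p := by
  constructor
  · rintro ⟨Δ, hprime, hval, hΔ⟩ a b hb hba
    rw [← div_mem_range_iff hb, hΔ, Set.mem_iInter₂] at hba
    push Not at hba
    obtain ⟨p, hp, hmem⟩ := hba
    have := hprime p hp
    rw [div_mem_locSet_iff hb, not_not] at hmem
    exact ⟨p, isValuedPrime_iff_locSet.2 (hval p hp), hmem⟩
  · intro h
    refine ⟨{p | IsValuedPrime p}, fun p hp ↦ hp.toIsPrime,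
      fun p hp ↦ (isValuedPrime_iff_locSet (hp := hp.toIsPrime)).1 hp, Set.ext fun x ↦ ?_⟩
    obtain ⟨a, b, hb, rfl⟩ := IsFractionRing.div_surjective (A := R) x
    have hb0 := nonZeroDivisors.ne_zero hb
    simp only [div_mem_range_iff hb0, Set.mem_iInter₂, div_mem_locSet_iff hb0]
    refine ⟨fun hba p hp hle ↦ hp.ne_top ?_, fun hp ↦ ?_⟩
    · rwa [denIdeal_eq_top_iff.2 hba, top_le_iff] at hle
    · by_contra hba
      obtain ⟨p, hval, hle⟩ := h a b hb0 hba
      exact hp p hval hle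

lemma isEssential_localization_iff (q : Ideal R) [q.IsPrime] :
    IsEssential (Localization.AtPrime q) ↔
      ∀ a b : R, b ≠ 0 → denIdeal a b ≤ q →
        ∃ p, IsValuedPrime p ∧ denIdeal a b ≤ p ∧ p ≤ q := by
  have inj : Function.Injective (algebraMap R (Localization.AtPrime q)) :=
    IsLocalization.injective _ q.primeCompl_le_nonZeroDivisors
  have dvd_iff (a b : R) : algebraMap R (Localization.AtPrime q) b ∣ algebraMap R _ a ↔
      ¬ denIdeal a b ≤ q := by
    rw [algebraMap_dvd_algebraMap_iff q.primeCompl, SetLike.not_le_iff_exists]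
    exact ⟨fun ⟨t, ht, h⟩ ↦ ⟨t, mem_denIdeal.2 h, ht⟩, fun ⟨t, h, ht⟩ ↦ ⟨t, ht, mem_denIdeal.1 h⟩⟩
  rw [isEssential_iff]
  constructor
  · intro h a b hb hle
    obtain ⟨P, hP, hPle⟩ := h (algebraMap R _ a) (algebraMap R _ b) ((map_ne_zero_iff _ inj).2 hb)
      (by rw [dvd_iff, not_not]; exact hle)
    have := hP.toIsPrime
    rw [denIdeal_algebraMap q.primeCompl, Ideal.map_le_iff_le_comap] at hPle
    exact ⟨P.under R, (isValuedPrime_under_iff q.primeCompl).2 hP, hPle,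
      (Ideal.comap_mono (IsLocalRing.le_maximalIdeal hP.ne_top)).trans
        Localization.AtPrime.under_maximalIdeal.le⟩
  · intro h x y hy hdvd
    obtain ⟨a, ha⟩ := exists_associated_algebraMap q.primeCompl x
    obtain ⟨b, hb⟩ := exists_associated_algebraMap q.primeCompl y
    rw [hb.dvd_iff_dvd_left, ha.dvd_iff_dvd_right, dvd_iff, not_not] at hdvd
    obtain ⟨p, hp, hle, hpq⟩ := h a b (by rintro rfl; simp_all) hdvd
    have := hp.toIsPrime
    have := Ideal.isPrime_map_of_isLocalizationAtPrime q (S := Localization.AtPrime q) hpq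
    refine ⟨p.map (algebraMap R _), (isValuedPrime_under_iff q.primeCompl).1 ?_, ?_⟩
    · rwa [Ideal.under_map_of_isLocalizationAtPrime q hpq]
    · rw [denIdeal_congr ha hb, denIdeal_algebraMap q.primeCompl]
      exact Ideal.map_mono hle

end Essential

section TClosure

variable {R : Type*} [CommRing R]

/-- The `v`-closure `(J⁻¹)⁻¹` of a nonzero integral ideal `J`, as an ideal of `R`: a fraction
`a / b` lies in `J⁻¹` if and only if `J` is contained in its denominator ideal. -/
def vClosure (J : Ideal R) : Ideal R :=
  ⨅ (a) (b) (_ : J ≤ denIdeal a b), denIdeal a b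

lemma mem_vClosure {J : Ideal R} {y : R} :
    y ∈ vClosure J ↔ ∀ a b, J ≤ denIdeal a b → y ∈ denIdeal a b := by
  simp only [vClosure, Submodule.mem_iInf]

lemma le_vClosure (J : Ideal R) : J ≤ vClosure J :=
  fun _ hy ↦ mem_vClosure.2 fun _ _ h ↦ h hy

lemma vClosure_le_denIdeal {J : Ideal R} {a b : R} (h : J ≤ denIdeal a b) :
    vClosure J ≤ denIdeal a b :=
  fun _ hy ↦ mem_vClosure.1 hy a b h

lemma vClosure_le_vClosure {J J' : Ideal R} (h : J ≤ vClosure J') : vClosure J ≤ vClosure J' :=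
  fun _ hy ↦ mem_vClosure.2 fun _ _ hJ' ↦
    vClosure_le_denIdeal (h.trans (vClosure_le_denIdeal hJ')) hy

lemma vClosure_mono {J J' : Ideal R} (h : J ≤ J') : vClosure J ≤ vClosure J' :=
  vClosure_le_vClosure (h.trans (le_vClosure J'))

lemma vClosure_mul_vClosure_le (J J' : Ideal R) :
    vClosure J * vClosure J' ≤ vClosure (J * J') := by
  refine Ideal.mul_le.2 fun y hy y' hy' ↦ mem_vClosure.2 fun a b h ↦ ?_
  have hJ' : J' ≤ denIdeal (y * a) b := fun j' hj' ↦ by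
    have hJ : J ≤ denIdeal (j' * a) b := fun j hj ↦
      mul_mem_denIdeal.1 (h (Ideal.mul_mem_mul hj hj'))
    rw [← mul_mem_denIdeal, mul_comm, mul_mem_denIdeal]
    exact mem_vClosure.1 hy _ _ hJ
  rw [mul_comm, mul_mem_denIdeal]
  exact mem_vClosure.1 hy' _ _ hJ'

lemma vClosure_pow_le (J : Ideal R) (n : ℕ) : vClosure J ^ n ≤ vClosure (J ^ n) := by
  induction n with
  | zero => simpa only [pow_zero] using le_vClosure 1
  | succ n ih =>
    rw [pow_succ, pow_succ]
    exact (Ideal.mul_mono_left ih).trans (vClosure_mul_vClosure_le _ _)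

/-- The `t`-closure of an ideal, as an ideal; see `mem_tClosureIdeal` for its elements. It differs
from the set `tClosure` at the zero ideal only, where `tClosure` is empty. -/
def tClosureIdeal (I : Ideal R) : Ideal R :=
  sSup (vClosure '' {J | J.FG ∧ J ≤ I})

lemma directedOn_vClosure (I : Ideal R) :
    DirectedOn (· ≤ ·) (vClosure '' {J | J.FG ∧ J ≤ I}) := by
  rintro _ ⟨J, ⟨hJ, hJI⟩, rfl⟩ _ ⟨J', ⟨hJ', hJI'⟩, rfl⟩
  exact ⟨_, ⟨J ⊔ J', ⟨Submodule.FG.sup hJ hJ', sup_le hJI hJI'⟩, rfl⟩,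
    vClosure_mono le_sup_left, vClosure_mono le_sup_right⟩

lemma nonempty_vClosure (I : Ideal R) : (vClosure '' {J | J.FG ∧ J ≤ I}).Nonempty :=
  ⟨_, ⊥, ⟨Submodule.fg_bot, bot_le⟩, rfl⟩

lemma mem_tClosureIdeal {I : Ideal R} {y : R} :
    y ∈ tClosureIdeal I ↔ ∃ J : Ideal R, J.FG ∧ J ≤ I ∧ y ∈ vClosure J := by
  rw [tClosureIdeal, Submodule.mem_sSup_of_directed (nonempty_vClosure I) (directedOn_vClosure I)]
  simp only [Set.exists_mem_image, Set.mem_ofPred_eq, and_assoc]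

lemma le_tClosureIdeal (I : Ideal R) : I ≤ tClosureIdeal I := fun y hy ↦
  mem_tClosureIdeal.2 ⟨Ideal.span {y}, ⟨{y}, by simp⟩, by simpa using hy,
    le_vClosure _ (Ideal.mem_span_singleton_self y)⟩

lemma vClosure_le_tClosureIdeal {I J : Ideal R} (hJ : J.FG) (h : J ≤ I) :
    vClosure J ≤ tClosureIdeal I := fun _ hy ↦ mem_tClosureIdeal.2 ⟨J, hJ, h, hy⟩

lemma exists_le_of_fg_of_le_sSup {J : Ideal R} (hJ : J.FG) {s : Set (Ideal R)} (hs : s.Nonempty)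
    (hdir : DirectedOn (· ≤ ·) s) (h : J ≤ sSup s) : ∃ I ∈ s, J ≤ I :=
  (CompleteLattice.isCompactElement_iff_le_of_directed_sSup_le _ J).1
    ((Submodule.fg_iff_compact J).1 hJ) s hs hdir h

lemma tClosureIdeal_idem (I : Ideal R) : tClosureIdeal (tClosureIdeal I) = tClosureIdeal I := by
  refine le_antisymm (fun y hy ↦ ?_) (le_tClosureIdeal _)
  obtain ⟨J, hJ, hJI, hy⟩ := mem_tClosureIdeal.1 hy
  obtain ⟨_, ⟨J', ⟨hJ', hJI'⟩, rfl⟩, hle⟩ :=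
    exists_le_of_fg_of_le_sSup hJ (nonempty_vClosure I) (directedOn_vClosure I) hJI
  exact vClosure_le_tClosureIdeal hJ' hJI' (vClosure_le_vClosure hle hy)

lemma tClosureIdeal_denIdeal (a b : R) : tClosureIdeal (denIdeal a b) = denIdeal a b := by
  refine le_antisymm (fun y hy ↦ ?_) (le_tClosureIdeal _)
  obtain ⟨J, _, hJ, hy⟩ := mem_tClosureIdeal.1 hy
  exact vClosure_le_denIdeal hJ hy

lemma exists_span_singleton_mul_le {I J p : Ideal R} [p.IsPrime] (hJ : J.FG)
    (h : J.map (algebraMap R (Localization.AtPrime p)) ≤ I.map (algebraMap R _)) :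
    ∃ s ∉ p, Ideal.span {s} * J ≤ I := by
  induction J, hJ using Submodule.fg_induction with
  | singleton a =>
    obtain ⟨s, hs, hsa⟩ := (IsLocalization.algebraMap_mem_map_algebraMap_iff p.primeCompl _ I a).1
      (h (Ideal.mem_map_of_mem _ (Ideal.mem_span_singleton_self a)))
    refine ⟨s, hs, ?_⟩
    rwa [Ideal.submodule_span_eq, Ideal.span_singleton_mul_span_singleton,
      Ideal.span_singleton_le_iff_mem]
  | sup J J' _ _ ih ih' =>
    obtain ⟨s, hs, hsJ⟩ := ih ((Ideal.map_mono le_sup_left).trans h)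
    obtain ⟨t, ht, htJ'⟩ := ih' ((Ideal.map_mono le_sup_right).trans h)
    refine ⟨s * t, p.primeCompl.mul_mem hs ht, ?_⟩
    rw [← Ideal.span_singleton_mul_span_singleton, Ideal.mul_sup]
    exact sup_le ((Ideal.mul_mono_left Ideal.mul_le_left).trans hsJ)
      ((Ideal.mul_mono_left Ideal.mul_le_right).trans htJ')

lemma exists_span_singleton_mul_pow_le {I J p : Ideal R} (hp : p ∈ I.minimalPrimes) (hJ : J.FG)
    (hJp : J ≤ p) : ∃ s ∉ p, ∃ n : ℕ, Ideal.span {s} * J ^ n ≤ I := by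
  have := hp.1.1
  have hrad : J.map (algebraMap R (Localization.AtPrime p)) ≤ (I.map (algebraMap R _)).radical := by
    rw [IsLocalization.AtPrime.radical_map_of_mem_minimalPrimes (Localization.AtPrime p) p I hp]
    exact Ideal.map_mono hJp
  obtain ⟨n, hn⟩ := Ideal.exists_pow_le_of_le_radical_of_fg hrad (hJ.map _)
  rw [← Ideal.map_pow] at hn
  obtain ⟨s, hs, h⟩ := exists_span_singleton_mul_le (Submodule.FG.pow hJ n) hn
  exact ⟨s, hs, n, h⟩

lemma tClosureIdeal_eq_of_mem_minimalPrimes {I p : Ideal R} (hI : tClosureIdeal I = I)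
    (hp : p ∈ I.minimalPrimes) : tClosureIdeal p = p := by
  have prime := hp.1.1
  refine le_antisymm (fun y hy ↦ ?_) (le_tClosureIdeal p)
  obtain ⟨J, hJ, hJp, hy⟩ := mem_tClosureIdeal.1 hy
  obtain ⟨s, hs, n, hle⟩ := exists_span_singleton_mul_pow_le hp hJ hJp
  have hsy : s * y ^ n ∈ I := by
    rw [← hI]
    have hfg : (Ideal.span {s} * J ^ n).FG :=
      Submodule.FG.mul ⟨{s}, by simp⟩ (Submodule.FG.pow hJ n)
    have hyn : y ^ n ∈ vClosure (J ^ n) := vClosure_pow_le J n (Ideal.pow_mem_pow hy n)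
    exact vClosure_le_tClosureIdeal hfg hle (vClosure_mul_vClosure_le _ _
      (Ideal.mul_mem_mul (le_vClosure _ (Ideal.mem_span_singleton_self s)) hyn))
  exact prime.mem_of_pow_mem n ((prime.mem_or_mem (hp.1.2 hsy)).resolve_left hs)

lemma exists_maximal_tClosureIdeal_ne_top {p : Ideal R} (hp : tClosureIdeal p ≠ ⊤) :
    ∃ m, p ≤ m ∧ Maximal (fun I : Ideal R ↦ tClosureIdeal I ≠ ⊤) m := by
  refine zorn_le_nonempty₀ _ (fun c hc hchain I hI ↦ ?_) p hp
  refine ⟨sSup c, fun htop ↦ ?_, fun _ ↦ le_sSup⟩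
  obtain ⟨J, hJ, hle, h1⟩ := mem_tClosureIdeal.1 ((Ideal.eq_top_iff_one _).1 htop)
  obtain ⟨I', hI', hJI'⟩ := exists_le_of_fg_of_le_sSup hJ ⟨I, hI⟩ hchain.directedOn hle
  exact hc hI' ((Ideal.eq_top_iff_one _).2 (vClosure_le_tClosureIdeal hJ hJI' h1))

lemma tClosureIdeal_eq_of_maximal {m : Ideal R}
    (hm : Maximal (fun I : Ideal R ↦ tClosureIdeal I ≠ ⊤) m) : tClosureIdeal m = m :=
  (hm.eq_of_ge (by rw [tClosureIdeal_idem]; exact hm.prop) (le_tClosureIdeal m))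

lemma isPrime_of_maximal_tClosureIdeal {m : Ideal R}
    (hm : Maximal (fun I : Ideal R ↦ tClosureIdeal I ≠ ⊤) m) : m.IsPrime := by
  have hmt := tClosureIdeal_eq_of_maximal hm
  have exists_fg {a : R} (ha : a ∉ m) :
      ∃ J : Ideal R, J.FG ∧ J ≤ m ⊔ Ideal.span {a} ∧ 1 ∈ vClosure J := by
    rw [← mem_tClosureIdeal, ← Ideal.eq_top_iff_one]
    by_contra h
    exact ha (hm.le_of_ge h le_sup_left (Ideal.mem_sup_right (Ideal.mem_span_singleton_self a)))
  refine ⟨hmt ▸ hm.prop, fun {a b} hab ↦ ?_⟩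
  by_contra! hcon
  obtain ⟨J, hJ, hJa, h1⟩ := exists_fg hcon.1
  obtain ⟨J', hJ', hJb, h1'⟩ := exists_fg hcon.2
  have hle : J * J' ≤ m := by
    refine (Ideal.mul_mono hJa hJb).trans ?_
    rw [Ideal.sup_mul, Ideal.mul_sup, Ideal.mul_sup, Ideal.span_singleton_mul_span_singleton]
    exact sup_le (sup_le Ideal.mul_le_left Ideal.mul_le_left)
      (sup_le Ideal.mul_le_right ((Ideal.span_singleton_le_iff_mem _).2 hab))
  refine hm.prop ((Ideal.eq_top_iff_one _).2 (vClosure_le_tClosureIdeal (hJ.mul hJ') hle ?_))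
  simpa only [mul_one] using vClosure_mul_vClosure_le J J' (Ideal.mul_mem_mul h1 h1')

end TClosure

section PVMD

open FractionalIdeal

variable {R : Type*} [CommRing R] [IsDomain R]

lemma div_mem_inv_coeIdeal_iff {J : Ideal R} (hJ : J ≠ ⊥) {a b : R} (hb : b ≠ 0) :
    algebraMap R (FractionRing R) a / algebraMap R (FractionRing R) b ∈
      (J : FractionalIdeal (nonZeroDivisors R) (FractionRing R))⁻¹ ↔ J ≤ denIdeal a b := by
  rw [mem_inv_iff (coeIdeal_ne_zero.2 hJ)]
  simp only [mem_coeIdeal, forall_exists_index, and_imp, forall_apply_eq_imp_iff₂, mem_one_iff,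
    ← Set.mem_range, div_mul_eq_mul_div, ← map_mul, div_mem_range_iff hb, SetLike.le_def,
    mem_denIdeal, mul_comm a]

lemma algebraMap_mem_inv_inv_coeIdeal_iff {J : Ideal R} (hJ : J ≠ ⊥) {y : R} :
    algebraMap R (FractionRing R) y ∈
      ((J : FractionalIdeal (nonZeroDivisors R) (FractionRing R))⁻¹)⁻¹ ↔ y ∈ vClosure J := by
  have one_mem : (1 : FractionRing R) ∈
      (J : FractionalIdeal (nonZeroDivisors R) (FractionRing R))⁻¹ := by
    simpa using (div_mem_inv_coeIdeal_iff hJ (a := 1) one_ne_zero).2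
      fun _ _ ↦ mem_denIdeal.2 (one_dvd _)
  have inv_ne_zero : (J : FractionalIdeal (nonZeroDivisors R) (FractionRing R))⁻¹ ≠ 0 :=
    fun h0 ↦ one_ne_zero ((mem_zero_iff _).1 (h0 ▸ one_mem))
  rw [mem_inv_iff inv_ne_zero, mem_vClosure]
  simp only [mem_one_iff, ← Set.mem_range]
  refine ⟨fun h a b hab ↦ ?_, fun h z hz ↦ ?_⟩
  · rcases eq_or_ne b 0 with rfl | hb
    · obtain ⟨j, hj, hj0⟩ := Submodule.exists_mem_ne_zero_of_ne_bot hJ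
      have ha : a = 0 :=
        (mul_eq_zero.1 (zero_dvd_iff.1 (mem_denIdeal.1 (hab hj)))).resolve_left hj0
      simp [ha, denIdeal_zero_left]
    · have := h _ ((div_mem_inv_coeIdeal_iff hJ hb).2 hab)
      rwa [← mul_div_assoc, ← map_mul, div_mem_range_iff hb, ← mem_denIdeal] at this
  · obtain ⟨a, b, hb, rfl⟩ := IsFractionRing.div_surjective (A := R) z
    have hb0 := nonZeroDivisors.ne_zero hb
    rw [← mul_div_assoc, ← map_mul, div_mem_range_iff hb0, ← mem_denIdeal]
    exact h a b ((div_mem_inv_coeIdeal_iff hJ hb0).1 hz)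

lemma mem_tClosure_iff {I : Ideal R} {y : R} :
    y ∈ tClosure R I ↔ ∃ J : Ideal R, J ≠ ⊥ ∧ J.FG ∧ J ≤ I ∧ y ∈ vClosure J := by
  have inj := IsFractionRing.injective R (FractionRing R)
  constructor
  · rintro ⟨J, hJ0, hJ, hJI, hy⟩
    obtain ⟨J, rfl⟩ := le_one_iff_exists_coeIdeal.1 (hJI.trans coeIdeal_le_one)
    rw [coeIdeal_ne_zero] at hJ0
    exact ⟨J, hJ0, (coeIdeal_fg _ inj _).1 hJ, (coeIdeal_le_coeIdeal _).1 hJI,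
      (algebraMap_mem_inv_inv_coeIdeal_iff hJ0).1 hy⟩
  · rintro ⟨J, hJ0, hJ, hJI, hy⟩
    exact ⟨J, coeIdeal_ne_zero.2 hJ0, (coeIdeal_fg _ inj _).2 hJ, (coeIdeal_le_coeIdeal _).2 hJI,
      (algebraMap_mem_inv_inv_coeIdeal_iff hJ0).2 hy⟩

lemma tClosure_eq_tClosureIdeal {I : Ideal R} (hI : I ≠ ⊥) :
    tClosure R I = (tClosureIdeal I : Set R) := by
  ext y
  rw [mem_tClosure_iff, SetLike.mem_coe, mem_tClosureIdeal]
  refine ⟨fun ⟨J, _, h⟩ ↦ ⟨J, h⟩, fun ⟨J, hJ, hJI, hy⟩ ↦ ?_⟩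
  obtain ⟨x, hx, hx0⟩ := Submodule.exists_mem_ne_zero_of_ne_bot hI
  refine ⟨J ⊔ Ideal.span {x}, fun h ↦ hx0 ?_, Submodule.FG.sup hJ ⟨{x}, by simp⟩,
    sup_le hJI ((Ideal.span_singleton_le_iff_mem _).2 hx), vClosure_mono le_sup_left hy⟩
  exact Ideal.span_singleton_eq_bot.1 (le_bot_iff.1 (h ▸ le_sup_right))

lemma isTIdeal_iff {I : Ideal R} (hI : I ≠ ⊥) : IsTIdeal R I ↔ tClosureIdeal I = I := by
  rw [IsTIdeal, tClosure_eq_tClosureIdeal hI, SetLike.coe_set_eq]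

namespace IsPVMD

lemma isValuedPrime_of_maximal (hR : IsPVMD R) {m : Ideal R} (hm0 : m ≠ ⊥)
    (hm : Maximal (fun I : Ideal R ↦ tClosureIdeal I ≠ ⊤) m) : IsValuedPrime m := by
  have hmt := tClosureIdeal_eq_of_maximal hm
  have := isPrime_of_maximal_tClosureIdeal hm
  have hmax (J : Ideal R) (hJt : IsTIdeal R J) (hJ : J ≠ ⊤) (hmJ : m ≤ J) : m = J := by
    rw [isTIdeal_iff (ne_bot_of_le_ne_bot hm0 hmJ)] at hJt
    exact hm.eq_of_le (by rwa [hJt]) hmJ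
  have := hR m this ⟨(isTIdeal_iff hm0).2 hmt, hmt ▸ hm.prop, hmax⟩
  exact isValuedPrime_of_valuationRing m

theorem isLocallyEssential (hR : IsPVMD R) : IsLocallyEssential R := by
  refine fun q _ ↦ (isEssential_localization_iff q).2 fun a b hb hle ↦ ?_
  obtain ⟨p, hp, hpq⟩ := Ideal.exists_minimalPrimes_le hle
  have hpt : tClosureIdeal p = p :=
    tClosureIdeal_eq_of_mem_minimalPrimes (tClosureIdeal_denIdeal a b) hp
  obtain ⟨m, hpm, hm⟩ := exists_maximal_tClosureIdeal_ne_top (hpt.symm ▸ hp.1.1.ne_top)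
  have hm0 : m ≠ ⊥ := fun h ↦ hb ((Submodule.mem_bot R).1
    (h ▸ hpm (hp.1.2 (self_mem_denIdeal a b))))
  exact ⟨p, (hR.isValuedPrime_of_maximal hm0 hm).of_le hp.1.1 hpm, hp.1.2, hpq⟩

end IsPVMD

end PVMD

section ValuedPrimeHeight

open MvPolynomial

variable {R : Type*} [CommRing R]

lemma IsValuedPrime.exists_C_mul_eq_C_mul [IsDomain R] {ι : Type*} {q : Ideal R}
    (hq : IsValuedPrime q) {F : MvPolynomial ι R} (hF : F ≠ 0) :
    ∃ s ∉ q, ∃ c g, C s * F = C c * g ∧ ∃ m, g.coeff m ∉ q := by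
  obtain ⟨m, hm, s, hs, hdvd⟩ := hq.exists_forall_dvd F.coeff (support_nonempty.2 hF)
  obtain ⟨g, hg⟩ : C (F.coeff m) ∣ C s * F := by
    refine (C_dvd_iff_dvd_coeff _ _).2 fun k ↦ ?_
    rw [coeff_C_mul]
    by_cases hk : k ∈ F.support
    · exact hdvd k hk
    · simp [notMem_support_iff.1 hk]
  refine ⟨s, hs, F.coeff m, g, hg, m, ?_⟩
  have hcoeff := congrArg (coeff m) hg
  rw [coeff_C_mul, coeff_C_mul, mul_comm] at hcoeff
  rwa [← mul_left_cancel₀ (mem_support_iff.1 hm) hcoeff]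

lemma coeff_mem_of_eval₂_mem {A B : Type*} [CommRing A] [CommRing B] {φ : A →+* B}
    {P Q : Ideal B} [hQ : Q.IsPrime] (hQP : Q ≤ P) (hφ : P.comap φ ≤ Q.comap φ) {z : B}
    (hzP : z ∈ P) (hzQ : z ∉ Q) {F : Polynomial A} (hF : F.eval₂ φ z ∈ Q) (n : ℕ) :
    φ (F.coeff n) ∈ Q := by
  have coeff_zero_and_divX {F : Polynomial A} (hF : F.eval₂ φ z ∈ Q) :
      φ (F.coeff 0) ∈ Q ∧ F.divX.eval₂ φ z ∈ Q := by
    have hdiv : F.eval₂ φ z = F.divX.eval₂ φ z * z + φ (F.coeff 0) := by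
      conv_lhs => rw [← F.divX_mul_X_add]
      simp
    have h0 : φ (F.coeff 0) ∈ Q :=
      hφ ((P.add_mem_iff_right (P.mul_mem_left _ hzP)).1 (hdiv ▸ hQP hF))
    rw [hdiv, Q.add_mem_iff_left h0] at hF
    exact ⟨h0, (hQ.mem_or_mem hF).resolve_right hzQ⟩
  induction n generalizing F with
  | zero => exact (coeff_zero_and_divX hF).1
  | succ n ih => simpa only [Polynomial.coeff_divX] using ih (coeff_zero_and_divX hF).2

variable {B : Type*} [CommRing B] [Algebra R B]

/-- The family `y` of elements of an `R`-algebra `B` is *algebraically independent modulo* the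
ideal `P` of `B`: its image in `B / P` is algebraically independent over `R / (P ∩ R)`. -/
def AlgIndepMod (R : Type*) [CommRing R] {B ι : Type*} [CommRing B] [Algebra R B] (P : Ideal B)
    (y : ι → B) : Prop :=
  ∀ F : MvPolynomial ι R, aeval y F ∈ P → ∀ m, F.coeff m ∈ P.under R

lemma aeval_option_elim {ι : Type*} (y : ι → B) (z : B) (F : MvPolynomial (Option ι) R) :
    aeval (fun o : Option ι ↦ o.elim z y) F =
      (optionEquivLeft R ι F).eval₂ (aeval y : MvPolynomial ι R →ₐ[R] B).toRingHom z := by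
  induction F using MvPolynomial.induction_on with
  | C a => simp [optionEquivLeft_C]
  | add F G hF hG => rw [map_add, map_add, Polynomial.eval₂_add, hF, hG]
  | mul_X F o hF =>
    rw [map_mul, map_mul, Polynomial.eval₂_mul, hF]
    cases o <;> simp [optionEquivLeft_X_none, optionEquivLeft_X_some]

namespace AlgIndepMod

variable {ι : Type*} {P Q : Ideal B} {y : ι → B}

lemma of_isEmpty [IsEmpty ι] : AlgIndepMod R P y := fun F hF m ↦ by
  rw [eq_C_of_isEmpty F, aeval_C] at hF
  rwa [Subsingleton.elim m 0]

lemma of_le [IsDomain R] [Q.IsPrime] (hy : AlgIndepMod R P y) (hP : IsValuedPrime (P.under R))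
    (hQP : Q ≤ P) : AlgIndepMod R Q y := by
  intro F hF m
  by_contra hm
  have hF0 : F ≠ 0 := by
    rintro rfl
    simp at hm
  have prime : (Q.under R).IsPrime := inferInstance
  obtain ⟨s, hs, c, g, hg, k, hk⟩ := hP.exists_C_mul_eq_C_mul hF0
  have hc : c ∉ Q.under R := fun hc ↦ by
    have hmem : s * F.coeff m ∈ Q.under R := by
      rw [← coeff_C_mul, hg, coeff_C_mul]
      exact Ideal.mul_mem_right _ _ hc
    exact (prime.mem_or_mem hmem).elim (fun h ↦ hs (hQP h)) hm
  have hgQ : algebraMap R B c * aeval y g ∈ Q := by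
    rw [← aeval_C y, ← map_mul, ← hg, map_mul]
    exact Q.mul_mem_left _ hF
  exact hk (hy g (hQP ((‹Q.IsPrime›.mem_or_mem hgQ).resolve_left hc)) k)

lemma algebraicIndependent [FaithfulSMul R B] (hy : AlgIndepMod R (⊥ : Ideal B) y) :
    AlgebraicIndependent R y := by
  rw [algebraicIndependent_iff]
  intro F hF
  ext m
  have hm := hy F hF m
  rwa [Ideal.under_def, Ideal.mem_comap, Ideal.mem_bot, FaithfulSMul.algebraMap_eq_zero_iff] at hm

lemma option_elim [Q.IsPrime] (hy : AlgIndepMod R P y) (hQP : Q ≤ P)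
    (hunder : Q.under R = P.under R) {z : B} (hzP : z ∈ P) (hzQ : z ∉ Q) :
    AlgIndepMod R Q (fun o : Option ι ↦ o.elim z y) := by
  intro F hF m
  have comap_le : P.comap (aeval y : MvPolynomial ι R →ₐ[R] B).toRingHom ≤
      Q.comap (aeval y : MvPolynomial ι R →ₐ[R] B).toRingHom := fun G hG ↦ by
    change aeval y G ∈ Q
    rw [aeval_def, eval₂_eq]
    exact Q.sum_mem fun d _ ↦ Q.mul_mem_right _ (hunder.ge (hy G hG d))
  rw [aeval_option_elim] at hF
  rw [hunder, ← optionEquivLeft_coeff_some_coeff_none]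
  exact hy _ (hQP (coeff_mem_of_eval₂_mem hQP comap_le hzP hzQ hF (m none))) _

end AlgIndepMod

end ValuedPrimeHeight

section HeightBound

open Cardinal

variable {R B : Type*} [CommRing R] [IsDomain R] [CommRing B] [Algebra R B]

lemma exists_lt_of_natCast_succ_le_height {P : Ideal B} [P.IsPrime] {n : ℕ}
    (h : ((n + 1 : ℕ) : ℕ∞) ≤ P.height) : ∃ Q, Q.IsPrime ∧ Q < P ∧ (n : ℕ∞) ≤ Q.height := by
  have h' : ¬ P.height ≤ n := fun hle ↦ by
    have := h.trans hle
    norm_cast at this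
    omega
  rw [Ideal.height_le_iff] at h'
  push Not at h'
  exact h'

lemma AlgIndepMod.natCast_add_card_le [IsDomain B] [FaithfulSMul R B] {ι : Type*} {P : Ideal B}
    [P.IsPrime] {y : ι → B} (hy : AlgIndepMod R P y) (hP : IsValuedPrime (P.under R)) {n : ℕ}
    (hn : (n : ℕ∞) ≤ P.height) :
    n + ENat.card ι ≤ (P.under R).height + toENat (Algebra.trdeg R B) := by
  induction n generalizing ι P with
  | zero =>
    have hcard : ENat.card ι ≤ toENat (Algebra.trdeg R B) := by
      simpa only [ENat.card, toENat_lift] using OrderHomClass.mono toENat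
        (hy.of_le hP bot_le).algebraicIndependent.lift_cardinalMk_le_trdeg
    rw [Nat.cast_zero, zero_add]
    exact hcard.trans le_add_self
  | succ n ih =>
    obtain ⟨Q, _, hQP, hnQ⟩ := exists_lt_of_natCast_succ_le_height hn
    have hle : Q.under R ≤ P.under R := Ideal.comap_mono hQP.le
    have hQ : IsValuedPrime (Q.under R) := hP.of_le inferInstance hle
    rcases hle.lt_or_eq with hlt | heq
    · calc ((n + 1 : ℕ) : ℕ∞) + ENat.card ι = n + ENat.card ι + 1 := by
            rw [Nat.cast_succ, add_right_comm]
        _ ≤ (Q.under R).height + toENat (Algebra.trdeg R B) + 1 := by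
            gcongr ?_ + 1
            exact ih (hy.of_le hP hQP.le) hQ hnQ
        _ ≤ (P.under R).height + toENat (Algebra.trdeg R B) := by
            rw [add_right_comm]
            gcongr
            exact Ideal.height_add_one_le_of_lt_of_isPrime hlt
    · obtain ⟨z, hzP, hzQ⟩ := SetLike.exists_of_lt hQP
      have h := ih (hy.option_elim hQP.le heq hzP hzQ) hQ hnQ
      rwa [ENat.card, mk_option, map_add, map_one, heq, add_comm (toENat _), ← add_assoc,
        ← Nat.cast_succ] at h

lemma IsValuedPrime.height_le [IsDomain B] [FaithfulSMul R B] {P : Ideal B} [P.IsPrime]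
    (hP : IsValuedPrime (P.under R)) :
    P.height ≤ (P.under R).height + toENat (Algebra.trdeg R B) := by
  refine ENat.forall_natCast_le_iff_le.1 fun n hn ↦ ?_
  simpa using (AlgIndepMod.of_isEmpty (y := Empty.elim)).natCast_add_card_le hP hn

lemma IsValuedPrime.height_le_ringKrullDim_add_one [IsDomain B] [FaithfulSMul R B]
    (hB : Algebra.trdeg R B ≤ 1) {P : Ideal B} [P.IsPrime] (hP : IsValuedPrime (P.under R)) :
    (P.height : WithBot ℕ∞) ≤ ringKrullDim R + 1 := by
  have htrdeg : toENat (Algebra.trdeg R B) ≤ 1 := by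
    simpa only [map_one] using OrderHomClass.mono toENat hB
  calc (P.height : WithBot ℕ∞) ≤ ((P.under R).height + 1 : ℕ∞) :=
        WithBot.coe_le_coe.2 (hP.height_le.trans (by gcongr))
    _ ≤ ringKrullDim R + 1 := by
        rw [WithBot.coe_add, WithBot.coe_one]
        gcongr
        exact Ideal.height_le_ringKrullDim_of_isPrime

lemma trdeg_fractionRing_polynomial :
    Algebra.trdeg R (Polynomial (FractionRing R)) = 1 := by
  have : Algebra.IsAlgebraic R (FractionRing R) := IsLocalization.isAlgebraic _ (nonZeroDivisors R)
  rw [← trdeg_add_eq R (FractionRing R), trdeg_eq_zero,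
    Polynomial.trdeg_of_isDomain, zero_add]

end HeightBound

section CommonLocalization

open Algebra

lemma ringKrullDim_le_of_isLocalization {A : Type*} (C : Type*) [CommRing A] [CommRing C]
    [Algebra A C] (M : Submonoid A) [IsLocalization M C] : ringKrullDim C ≤ ringKrullDim A :=
  (ringKrullDim_le_iff_height_le _).2 fun P _ ↦ by
    rw [← IsLocalization.height_under M]
    exact Ideal.height_le_ringKrullDim_of_isPrime

lemma height_le_ringKrullDim_localization {B : Type*} (C : Type*) [CommRing B] [CommRing C]
    [Algebra B C] (M : Submonoid B) [IsLocalization M C] {P : Ideal B} [hP : P.IsPrime]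
    (hdisj : Disjoint (M : Set B) P) : (P.height : WithBot ℕ∞) ≤ ringKrullDim C := by
  have := IsLocalization.isPrime_of_isPrime_disjoint M C P hP hdisj
  rw [← IsLocalization.height_map_of_disjoint (S := C) M P hdisj]
  exact Ideal.height_le_ringKrullDim_of_isPrime

variable {A B : Type*} [CommRing A] [CommRing B] [Algebra A B] [FaithfulSMul A B]

lemma isLocalization_of_forall_exists_mul_eq {M : Submonoid A}
    (hM : ∀ b : B, ∃ s ∈ M, ∃ a, algebraMap A B s * b = algebraMap A B a) (C : Type*) [CommRing C]
    [Algebra A C] [Algebra B C] [IsScalarTower A B C]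
    [hC : IsLocalization (algebraMapSubmonoid B M) C] : IsLocalization M C := by
  obtain ⟨units, surj, exists_of_eq⟩ := (isLocalization_iff (algebraMapSubmonoid B M) C).1 hC
  rw [isLocalization_iff]
  simp only [IsScalarTower.algebraMap_apply A B C]
  refine ⟨fun s ↦ units ⟨_, mem_algebraMapSubmonoid_of_mem s⟩, fun z ↦ ?_, fun {x y} hxy ↦ ?_⟩
  · obtain ⟨⟨b, _, t, ht, rfl⟩, hb⟩ := surj z
    obtain ⟨s, hs, a, ha⟩ := hM b
    refine ⟨(a, ⟨t, ht⟩ * ⟨s, hs⟩), ?_⟩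
    rw [← ha, mul_comm, Submonoid.coe_mul]
    simp only [map_mul, ← hb]
    ring
  · obtain ⟨⟨_, s, hs, rfl⟩, hxy⟩ := exists_of_eq hxy
    exact ⟨⟨s, hs⟩, FaithfulSMul.algebraMap_injective A B (by simpa only [map_mul] using hxy)⟩

lemma height_le_ringKrullDim_of_disjoint_algebraMapSubmonoid {M : Submonoid A}
    (hM : ∀ b : B, ∃ s ∈ M, ∃ a, algebraMap A B s * b = algebraMap A B a) {Q : Ideal B} [Q.IsPrime]
    (hQ : Disjoint (algebraMapSubmonoid B M : Set B) Q) :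
    (Q.height : WithBot ℕ∞) ≤ ringKrullDim A := by
  let C := Localization (algebraMapSubmonoid B M)
  have : IsLocalization M C := isLocalization_of_forall_exists_mul_eq hM C
  exact (height_le_ringKrullDim_localization C _ hQ).trans (ringKrullDim_le_of_isLocalization C M)

lemma height_le_ringKrullDim_of_disjoint {M : Submonoid A}
    (hM : ∀ b : B, ∃ s ∈ M, ∃ a, algebraMap A B s * b = algebraMap A B a) {P : Ideal A} [P.IsPrime]
    (hP : Disjoint (M : Set A) P) : (P.height : WithBot ℕ∞) ≤ ringKrullDim B := by
  let C := Localization (algebraMapSubmonoid B M)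
  have : IsLocalization M C := isLocalization_of_forall_exists_mul_eq hM C
  exact (height_le_ringKrullDim_localization C M hP).trans
    (ringKrullDim_le_of_isLocalization C (algebraMapSubmonoid B M))

end CommonLocalization

section Vandermonde

open Polynomial Matrix

variable {R : Type*} [CommRing R]

lemma vandermonde_mulVec_coeff {n : ℕ} {g : R[X]} (hg : g.natDegree < n) (v : Fin n → R) :
    vandermonde v *ᵥ (fun i ↦ g.coeff i) = fun i ↦ g.eval (v i) := by
  ext i
  rw [mulVec, dotProduct, eval_eq_sum_range' hg,
    ← Fin.sum_univ_eq_sum_range (fun k ↦ g.coeff k * v i ^ k)]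
  simp only [vandermonde_apply, mul_comm]

lemma det_vandermonde_mem_denIdeal {n : ℕ} {g : R[X]} (hg : g.natDegree < n) {b : R}
    {v : Fin n → R} (hv : ∀ i, b ∣ g.eval (v i)) (i : Fin n) :
    (vandermonde v).det ∈ denIdeal (g.coeff i) b := by
  have hdet : (vandermonde v).det * g.coeff i =
      ((vandermonde v).adjugate *ᵥ fun i ↦ g.eval (v i)) i := by
    rw [← vandermonde_mulVec_coeff hg, mulVec_mulVec, adjugate_mul, smul_mulVec, one_mulVec,
      Pi.smul_apply, smul_eq_mul]
  rw [mem_denIdeal, hdet, mulVec, dotProduct]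
  exact Finset.dvd_sum fun k _ ↦ (hv k).mul_left _

lemma exists_det_vandermonde_notMem (p : Ideal R) [p.IsPrime] [Infinite (R ⧸ p)] (n : ℕ) :
    ∃ v : Fin n → R, (vandermonde v).det ∉ p := by
  let w : Fin n → R ⧸ p := fun i ↦ Infinite.natEmbedding (R ⧸ p) i
  have hw : Function.Injective w := (Infinite.natEmbedding _).injective.comp Fin.val_injective
  choose v hv using fun i ↦ Ideal.Quotient.mk_surjective (w i)
  refine ⟨v, ?_⟩
  have hmap : (Ideal.Quotient.mk p).mapMatrix (vandermonde v) = vandermonde w := by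
    ext i j
    simp [vandermonde_apply, hv]
  rw [← Ideal.Quotient.eq_zero_iff_mem, RingHom.map_det, hmap]
  exact det_vandermonde_ne_zero_iff.2 hw

lemma not_denIdeal_coeff_le_of_infinite {g : R[X]} {b : R} (hg : ∀ r, b ∣ g.eval r) (p : Ideal R)
    [p.IsPrime] [Infinite (R ⧸ p)] (i : ℕ) : ¬ denIdeal (g.coeff i) b ≤ p := by
  obtain ⟨v, hv⟩ := exists_det_vandermonde_notMem p (max g.natDegree i + 1)
  have hi : i < max g.natDegree i + 1 := by omega
  exact fun hle ↦ hv (hle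
    (det_vandermonde_mem_denIdeal (by omega) (fun k ↦ hg (v k)) ⟨i, hi⟩))

end Vandermonde

section LocallyEssential

open Polynomial

variable {R : Type*} [CommRing R]

lemma exists_C_dvd_C_mul {q : Ideal R} [q.IsPrime] {g : R[X]} {b : R}
    (h : ∀ i, ¬ denIdeal (g.coeff i) b ≤ q) : ∃ s ∉ q, C b ∣ C s * g := by
  have hinf : ¬ g.support.inf (fun i ↦ denIdeal (g.coeff i) b) ≤ q := by
    rw [Ideal.IsPrime.inf_le' ‹_›]
    push Not
    exact fun i _ ↦ h i
  obtain ⟨s, hs, hsq⟩ := SetLike.not_le_iff_exists.1 hinf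
  refine ⟨s, hsq, (C_dvd_iff_dvd_coeff _ _).2 fun i ↦ ?_⟩
  rw [coeff_C_mul]
  by_cases hi : i ∈ g.support
  · exact mem_denIdeal.1 (Finset.inf_le (f := fun i ↦ denIdeal (g.coeff i) b) hi hs)
  · simp [notMem_support_iff.1 hi]

lemma infinite_quotient_of_lt {p q : Ideal R} [p.IsPrime] (hq : q ≠ ⊤) (hpq : p < q) :
    Infinite (R ⧸ p) := by
  by_contra hfin
  rw [not_infinite_iff_finite] at hfin
  have hp : p.IsMaximal := Ideal.Quotient.maximal_of_isField p (Finite.isField_of_domain _)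
  exact hpq.ne (hp.eq_of_le hq hpq.le)

lemma IsLocallyEssential.not_denIdeal_coeff_le [IsDomain R] (hR : IsLocallyEssential R)
    {q : Ideal R} [hq : q.IsPrime] (hval : ¬ IsValuedPrime q) {g : R[X]} {b : R} (hb : b ≠ 0)
    (hg : ∀ r, b ∣ g.eval r) (i : ℕ) : ¬ denIdeal (g.coeff i) b ≤ q := by
  intro hle
  obtain ⟨p, hp, hlep, hpq⟩ := (isEssential_localization_iff q).1 (hR q hq) _ b hb hle
  have := hp.toIsPrime
  have := infinite_quotient_of_lt hq.ne_top (hpq.lt_of_ne (by rintro rfl; exact hval hp))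
  exact not_denIdeal_coeff_le_of_infinite hg p i hlep

end LocallyEssential

section IntegerValued

open Polynomial

variable {R : Type*} [CommRing R] [IsDomain R]

namespace IntPoly

lemma mem_iff {f : (FractionRing R)[X]} :
    f ∈ IntPoly R ↔ ∀ a : R, f.eval (algebraMap R _ a) ∈ (algebraMap R (FractionRing R)).range := by
  simp only [IntPoly, Subring.mem_iInf, Subring.mem_comap, coe_evalRingHom]

/-- The inclusion of `R[X]` into the ring of integer-valued polynomials. -/
noncomputable instance : Algebra R[X] (IntPoly R) :=
  ((mapRingHom (algebraMap R (FractionRing R))).codRestrict (IntPoly R) fun f ↦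
    mem_iff.2 fun a ↦ ⟨f.eval a, by simp [eval_map_algebraMap, aeval_algebraMap_apply]⟩).toAlgebra

/-- The inclusion of `R`, as constant polynomials, into the ring of integer-valued polynomials. -/
noncomputable instance : Algebra R (IntPoly R) := ((algebraMap R[X] (IntPoly R)).comp C).toAlgebra

instance : IsScalarTower R R[X] (IntPoly R) := .of_algebraMap_eq fun _ ↦ rfl

lemma coe_algebraMap (g : R[X]) :
    (algebraMap R[X] (IntPoly R) g : (FractionRing R)[X]) = g.map (algebraMap R _) := rfl

instance : FaithfulSMul R[X] (IntPoly R) :=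
  (faithfulSMul_iff_algebraMap_injective _ _).2 fun _ _ h ↦
    map_injective _ (IsFractionRing.injective R (FractionRing R)) (congrArg Subtype.val h)

instance : FaithfulSMul R (IntPoly R) := .trans R R[X] (IntPoly R)

lemma trdeg_le_one : Algebra.trdeg R (IntPoly R) ≤ 1 := by
  let ι : IntPoly R →ₐ[R] (FractionRing R)[X] :=
    { (IntPoly R).subtype with commutes' := fun r ↦ map_C _ }
  rw [← trdeg_fractionRing_polynomial (R := R)]
  exact trdeg_le_of_injective ι Subtype.val_injective

/-- Evaluation of integer-valued polynomials at `a : R`, with values in `R`. -/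
noncomputable def evalRingHom (a : R) : IntPoly R →+* R :=
  (Algebra.botEquivOfInjective (IsFractionRing.injective R (FractionRing R))).toRingHom.comp
    (((Polynomial.evalRingHom (algebraMap R (FractionRing R) a)).comp
      (IntPoly R).subtype).codRestrict (⊥ : Subalgebra R (FractionRing R)) fun f ↦
        Algebra.mem_bot.2 (mem_iff.1 f.2 a))

lemma algebraMap_evalRingHom (a : R) (f : IntPoly R) :
    algebraMap R (FractionRing R) (evalRingHom a f) =
      (f : (FractionRing R)[X]).eval (algebraMap R _ a) :=
  congrArg Subtype.val ((Algebra.botEquivOfInjective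
    (IsFractionRing.injective R (FractionRing R))).symm_apply_apply _)

lemma evalRingHom_algebraMap (a : R) (g : R[X]) :
    evalRingHom a (algebraMap R[X] (IntPoly R) g) = g.eval a := by
  apply IsFractionRing.injective R (FractionRing R)
  rw [algebraMap_evalRingHom, coe_algebraMap, eval_map_algebraMap, aeval_algebraMap_apply,
    coe_aeval_eq_eval]

lemma ringKrullDim_add_one_le : ringKrullDim R + 1 ≤ ringKrullDim (IntPoly R) := by
  have hX : algebraMap R[X] (IntPoly R) X ≠ 0 := by
    rw [Ne, FaithfulSMul.algebraMap_eq_zero_iff]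
    exact X_ne_zero
  refine ringKrullDim_succ_le_of_surjective (evalRingHom 0) (fun r ↦ ?_)
    (mem_nonZeroDivisors_of_ne_zero hX) ?_
  · exact ⟨algebraMap R[X] _ (C r), by rw [evalRingHom_algebraMap, eval_C]⟩
  · rw [evalRingHom_algebraMap, eval_X]

lemma exists_C_mul_eq (f : IntPoly R) : ∃ b ≠ 0, ∃ g : R[X],
    algebraMap R[X] (IntPoly R) (C b) * f = algebraMap R[X] _ g ∧ ∀ r, b ∣ g.eval r := by
  obtain ⟨b, hb, h⟩ := IsLocalization.integerNormalization_spec (nonZeroDivisors R) f.1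
  have heq : algebraMap R[X] (IntPoly R) (C b) * f =
      algebraMap R[X] _ (IsLocalization.integerNormalization (nonZeroDivisors R) f.1) := by
    ext1
    rw [coe_algebraMap, h, Subring.coe_mul, coe_algebraMap, map_C, ← smul_eq_C_mul]
    exact algebraMap_smul _ _ _
  refine ⟨b, nonZeroDivisors.ne_zero hb, _, heq, fun r ↦ ⟨evalRingHom r f, ?_⟩⟩
  rw [← evalRingHom_algebraMap, ← heq, map_mul, evalRingHom_algebraMap, eval_C]

end IntPoly

lemma IsLocallyEssential.exists_mul_eq (hR : IsLocallyEssential R) {q : Ideal R} [q.IsPrime]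
    (hval : ¬ IsValuedPrime q) (f : IntPoly R) :
    ∃ s ∈ Algebra.algebraMapSubmonoid R[X] q.primeCompl, ∃ h,
      algebraMap R[X] (IntPoly R) s * f = algebraMap R[X] _ h := by
  obtain ⟨b, hb, g, hg, hdvd⟩ := IntPoly.exists_C_mul_eq f
  obtain ⟨s, hs, h, hh⟩ := exists_C_dvd_C_mul (hR.not_denIdeal_coeff_le hval hb hdvd)
  have hCb : algebraMap R[X] (IntPoly R) (C b) ≠ 0 := by
    rw [Ne, FaithfulSMul.algebraMap_eq_zero_iff]
    exact C_ne_zero.2 hb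
  refine ⟨C s, ⟨s, hs, rfl⟩, h, mul_left_cancel₀ hCb ?_⟩
  rw [mul_left_comm, hg, ← map_mul, ← map_mul, hh]

end IntegerValued

section KrullDimension

open Polynomial

variable {R : Type*} [CommRing R] [IsDomain R]

lemma IsLocallyEssential.height_le_ringKrullDim_polynomial (hR : IsLocallyEssential R)
    (P : Ideal (IntPoly R)) [P.IsPrime] : (P.height : WithBot ℕ∞) ≤ ringKrullDim R[X] := by
  by_cases hval : IsValuedPrime (P.under R)
  · exact (hval.height_le_ringKrullDim_add_one IntPoly.trdeg_le_one).trans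
      ringKrullDim_succ_le_ringKrullDim_polynomial
  · refine height_le_ringKrullDim_of_disjoint_algebraMapSubmonoid (hR.exists_mul_eq hval) ?_
    rw [Algebra.algebraMapSubmonoid_map_map]
    exact Ideal.disjoint_primeCompl_of_liesOver P _

lemma IsLocallyEssential.height_le_ringKrullDim_intPoly (hR : IsLocallyEssential R)
    (P : Ideal R[X]) [P.IsPrime] : (P.height : WithBot ℕ∞) ≤ ringKrullDim (IntPoly R) := by
  by_cases hval : IsValuedPrime (P.under R)
  · exact (hval.height_le_ringKrullDim_add_one Polynomial.trdeg_of_isDomain.le).trans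
      IntPoly.ringKrullDim_add_one_le
  · exact height_le_ringKrullDim_of_disjoint (hR.exists_mul_eq hval)
      (Ideal.disjoint_primeCompl_of_liesOver P _)

theorem dim_intPoly_eq_dim_polynomial_of_isPVMD_general (R : Type*) [CommRing R] [IsDomain R]
    (hR : IsLocallyEssential R) : ringKrullDim (IntPoly R) = ringKrullDim R[X] := by
  refine le_antisymm ?_ ?_ <;> rw [ringKrullDim_le_iff_height_le]
  · exact fun P _ ↦ hR.height_le_ringKrullDim_polynomial P
  · exact fun P _ ↦ hR.height_le_ringKrullDim_intPoly P

end KrullDimension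

/-- If `R` is a PVMD of finite Krull dimension, then
`dim(Int(R)) = dim(R[X])`. -/
theorem dim_intPoly_eq_dim_polynomial_of_isPVMD
    (R : Type*) [CommRing R] [IsDomain R]
    (hfin : ringKrullDim R ≠ ⊤)
    (hR : IsPVMD R) :
    ringKrullDim (IntPoly R) = ringKrullDim (Polynomial R) :=
  dim_intPoly_eq_dim_polynomial_of_isPVMD_general R hR.isLocallyEssential
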